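/- There exists a constant C > 0 depending only on n such that, for every abstract Monge–Ampère pairing setup (W, B, 𝟙, F) as in the context, every choice of reference element φ_ref ∈ F, and all ψ₁, ψ₂ ∈ F and φ₁, …, φₙ, φ'₁, …, φ'ₙ ∈ F: |B(ψ₁−ψ₂, φ'₁, …, φ'ₙ) − B(ψ₁−ψ₂, φ₁, …, φₙ)| ≤ C · I(ψ₁, ψ₂)^{1/2ⁿ} · (max_{1≤p≤n} I(φ_p, φ'_p))^{1/2ⁿ} · M^{1 − 1/2^{n−1}}, where M := max{J(ψ₁), J(ψ₂), max_p J(φ_p), max_p J(φ'_p)}. -/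

import Mathlib

open Finset

/-- Abstract Monge–Ampère pairing setup with `n = m + 1`: a symmetric multilinear
form `B` on `W^(n+1) = W^(m+2)`, a unit element `one`, and a nonempty convex set
`F ⊆ W`, satisfying (i) normalization `B(𝟙, φ₁, …, φₙ) = 1`, (ii) integration by
parts `B(u, 𝟙, g₂, …, gₙ) = 0` for `u ∈ W₀` and `gᵢ ∈ W' = span (F ∪ {𝟙})`, and
(iii) the Cauchy–Schwarz / local Hodge index inequality
`B(u, u, φ₁, …, φ_{n-1}) ≤ 0` for `u ∈ W₀`. -/
structure MASetup (m : ℕ) (W : Type*) [AddCommGroup W] [Module ℝ W] where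
  B : MultilinearMap ℝ (fun _ : Fin (m + 2) => W) ℝ
  symm : ∀ (v : Fin (m + 2) → W) (σ : Equiv.Perm (Fin (m + 2))), B (v ∘ σ) = B v
  one : W
  F : Set W
  Fne : F.Nonempty
  Fconv : Convex ℝ F
  unital : ∀ g : Fin (m + 1) → W, (∀ i, g i ∈ F) → B (Fin.cons one g) = 1
  parts : ∀ u ∈ Submodule.span ℝ ({x | ∃ φ ∈ F, ∃ ψ ∈ F, x = φ - ψ} ∪ {one}),
      ∀ g : Fin m → W, (∀ i, g i ∈ Submodule.span ℝ (F ∪ {one})) →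
        B (Fin.cons u (Fin.cons one g)) = 0
  hodge : ∀ u ∈ Submodule.span ℝ ({x | ∃ φ ∈ F, ∃ ψ ∈ F, x = φ - ψ} ∪ {one}),
      ∀ g : Fin m → W, (∀ i, g i ∈ F) → B (Fin.cons u (Fin.cons u g)) ≤ 0

namespace MASetup

variable {m : ℕ} {W : Type*} [AddCommGroup W] [Module ℝ W]

/-- The vector with `j` copies of `φ` followed by copies of `ψ`. -/
def mixVec (φ ψ : W) (j : ℕ) {k : ℕ} : Fin k → W := fun i => if (i : ℕ) < j then φ else ψ

/-- The linear span `W₀` of the differences of elements of `F` together with `one`. -/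
def W0 (S : MASetup m W) : Submodule ℝ W :=
  Submodule.span ℝ ({x | ∃ φ ∈ S.F, ∃ ψ ∈ S.F, x = φ - ψ} ∪ {S.one})

/-- The Monge–Ampère energy
`E(φ, ψ) = (n+1)⁻¹ ∑_{j=0}^{n} B(φ-ψ, φ, …, φ, ψ, …, ψ)` with `j` copies of `φ`
and `n - j` copies of `ψ` among the last `n` arguments. -/
noncomputable def energy (S : MASetup m W) (φ ψ : W) : ℝ :=
  ((m : ℝ) + 2)⁻¹ * ∑ j ∈ Finset.range (m + 2), S.B (Fin.cons (φ - ψ) (mixVec φ ψ j))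

/-- The functional `I(φ, ψ) = B(φ-ψ, ψ, …, ψ) - B(φ-ψ, φ, …, φ)`. -/
noncomputable def Ifun (S : MASetup m W) (φ ψ : W) : ℝ :=
  S.B (Fin.cons (φ - ψ) fun _ => ψ) - S.B (Fin.cons (φ - ψ) fun _ => φ)

/-- The functional `J_ψ(φ) = B(φ-ψ, ψ, …, ψ) - E(φ, ψ)`. -/
noncomputable def Jfun (S : MASetup m W) (ψ φ : W) : ℝ :=
  S.B (Fin.cons (φ - ψ) fun _ => ψ) - S.energy φ ψ

end MASetup


namespace MASetup

variable {m : ℕ} {W : Type*} [AddCommGroup W] [Module ℝ W]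

/-- The form with two distinguished slots. -/
def T (S : MASetup m W) (a b : W) : MultilinearMap ℝ (fun _ : Fin m => W) ℝ :=
  (S.B.curryLeft a).curryLeft b

lemma T_def (S : MASetup m W) (a b : W) (g : Fin m → W) :
    S.T a b g = S.B (Fin.cons a (Fin.cons b g)) := rfl

lemma T_add_left (S : MASetup m W) (a a' b : W) (g : Fin m → W) :
    S.T (a + a') b g = S.T a b g + S.T a' b g := by
  simp only [T, map_add]; rfl

lemma T_smul_left (S : MASetup m W) (c : ℝ) (a b : W) (g : Fin m → W) :
    S.T (c • a) b g = c * S.T a b g := by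
  simp only [T, map_smul]; rfl

lemma T_comm (S : MASetup m W) (a b : W) (g : Fin m → W) : S.T a b g = S.T b a g := by
  rw [T_def, T_def, ← S.symm _ (Equiv.swap 0 1)]
  congr 1
  funext i
  refine Fin.cases ?_ (fun i => Fin.cases ?_ (fun i => ?_) i) i
  · simp [Equiv.swap_apply_left]
  · have : (Fin.succ 0 : Fin (m + 2)) = 1 := rfl
    rw [this, Function.comp_apply, Equiv.swap_apply_right]
    rfl
  · have h : Equiv.swap (0 : Fin (m + 2)) 1 i.succ.succ = i.succ.succ := by
      apply Equiv.swap_apply_of_ne_of_ne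
      · exact Fin.succ_ne_zero _
      · intro h
        exact Fin.succ_ne_zero i (Fin.succ_injective _ h)
    simp [h]

lemma T_swap (S : MASetup m W) (u a b : W) (h : Fin m → W) (p : Fin m) :
    S.T u a (Function.update h p b) = S.T u b (Function.update h p a) := by
  rw [T_def, T_def, ← S.symm _ (Equiv.swap 1 p.succ.succ)]
  congr 1
  funext i
  have h1 : (Fin.succ 0 : Fin (m + 2)) = 1 := rfl
  refine Fin.cases ?_ (fun i => Fin.cases ?_ (fun i => ?_) i) i
  · have h : Equiv.swap (1 : Fin (m + 2)) p.succ.succ 0 = 0 := by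
      apply Equiv.swap_apply_of_ne_of_ne
      · exact (Fin.succ_ne_zero 0).symm
      · exact (Fin.succ_ne_zero _).symm
    rw [Function.comp_apply, h]
    rfl
  · rw [Function.comp_apply, h1, Equiv.swap_apply_left]
    change Function.update h p b p = b
    simp
  · by_cases hi : i = p
    · subst hi
      rw [Function.comp_apply, Equiv.swap_apply_right]
      change a = Function.update h i a i
      simp
    · have h' : Equiv.swap (1 : Fin (m + 2)) p.succ.succ i.succ.succ = i.succ.succ := by
        apply Equiv.swap_apply_of_ne_of_ne
        · intro h
          exact Fin.succ_ne_zero i (Fin.succ_injective _ h)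
        · intro h
          exact hi (Fin.succ_injective _ (Fin.succ_injective _ h))
      rw [Function.comp_apply, h']
      change Function.update h p b i = Function.update h p a i
      rw [Function.update_of_ne hi, Function.update_of_ne hi]

lemma B_cons_perm (S : MASetup m W) (u : W) (h : Fin (m + 1) → W)
    (σ : Equiv.Perm (Fin (m + 1))) :
    S.B (Fin.cons u (h ∘ σ)) = S.B (Fin.cons u h) := by
  rw [← S.symm (Fin.cons u h) (Equiv.Perm.decomposeFin.symm (0, σ))]
  congr 1
  funext i
  refine Fin.cases ?_ (fun i => ?_) i <;> simp

lemma T_perm (S : MASetup m W) (u v : W) (h : Fin m → W) (σ : Equiv.Perm (Fin m)) :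
    S.T u v (h ∘ σ) = S.T u v h := by
  rw [T_def, T_def, ← S.B_cons_perm u (Fin.cons v h) (Equiv.Perm.decomposeFin.symm (0, σ))]
  congr 2
  funext i
  refine Fin.cases ?_ (fun i => ?_) i <;> simp

lemma B_update (S : MASetup m W) (u w : W) (h : Fin (m + 1) → W) (p : Fin (m + 1)) :
    S.B (Fin.cons u (Function.update h p w)) =
      S.T u w (fun i => h (Equiv.swap 0 p i.succ)) := by
  rw [T_def, ← S.B_cons_perm u _ (Equiv.swap 0 p)]
  congr 2
  funext i
  refine Fin.cases ?_ (fun i => ?_) i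
  · simp
  · have : Equiv.swap 0 p i.succ ≠ p := by
      intro h
      have := congrArg (Equiv.swap 0 p) h
      simp [Fin.succ_ne_zero] at this
    simp [Function.update_of_ne this]

lemma sub_mem_W0 (S : MASetup m W) {a b : W} (ha : a ∈ S.F) (hb : b ∈ S.F) :
    a - b ∈ S.W0 :=
  Submodule.subset_span (Or.inl ⟨a, ha, b, hb, rfl⟩)

/-- The semi-norm squared. -/
def Q (S : MASetup m W) (g : Fin m → W) (u : W) : ℝ := - S.T u u g

lemma Q_nonneg (S : MASetup m W) {g : Fin m → W} (hg : ∀ i, g i ∈ S.F) {u : W}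
    (hu : u ∈ S.W0) : 0 ≤ S.Q g u := by
  have := S.hodge u hu g hg
  unfold Q
  rw [T_def]
  linarith

lemma Q_comb (S : MASetup m W) (g : Fin m → W) (u v : W) (s t : ℝ) :
    S.Q g (s • u + t • v) = s ^ 2 * S.Q g u - 2 * s * t * S.T u v g + t ^ 2 * S.Q g v := by
  unfold Q
  rw [T_add_left, T_smul_left, T_smul_left, T_comm S u, T_comm S v, T_add_left, T_add_left,
    T_smul_left, T_smul_left, T_smul_left, T_smul_left, T_comm S v u]
  ring

lemma cs (S : MASetup m W) {g : Fin m → W} (hg : ∀ i, g i ∈ S.F) {u v : W}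
    (hu : u ∈ S.W0) (hv : v ∈ S.W0) : S.T u v g ^ 2 ≤ S.Q g u * S.Q g v := by
  have h : ∀ t : ℝ, 0 ≤ S.Q g v * (t * t) + (-2 * S.T u v g) * t + S.Q g u := by
    intro t
    have := S.Q_nonneg hg (S.W0.add_mem (S.W0.smul_mem 1 hu) (S.W0.smul_mem t hv))
    rw [Q_comb] at this
    linarith
  have := discrim_le_zero h
  unfold discrim at this
  nlinarith

/-- Bounds on multi-affine functions pass to the convex hull. -/
lemma hull_bound : ∀ (k : ℕ) (f : MultilinearMap ℝ (fun _ : Fin k => W) ℝ) (G : Set W) (X : ℝ),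
    (∀ v, (∀ i, v i ∈ G) → f v ≤ X) → ∀ v, (∀ i, v i ∈ convexHull ℝ G) → f v ≤ X
  | 0, f, G, X, h, v, _ => h v (fun i => i.elim0)
  | k + 1, f, G, X, h, v, hv => by
    have key : ∀ x ∈ G, f (Fin.cons x (Fin.tail v)) ≤ X := by
      intro x hx
      refine hull_bound k (f.curryLeft x) G X (fun w hw => ?_) (Fin.tail v) (fun i => hv i.succ)
      refine h _ (fun i => ?_)
      refine Fin.cases ?_ (fun i => ?_) i
      · simpa using hx
      · simpa using hw i
    have hc : Convex ℝ {x : W | f (Fin.cons x (Fin.tail v)) ≤ X} := by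
      intro x hx y hy a b ha hb hab
      change f (Fin.cons x (Fin.tail v)) ≤ X at hx
      change f (Fin.cons y (Fin.tail v)) ≤ X at hy
      change f (Fin.cons (a • x + b • y) (Fin.tail v)) ≤ X
      rw [MultilinearMap.cons_add, MultilinearMap.cons_smul, MultilinearMap.cons_smul]
      have hX : X = a * X + b * X := by rw [← add_mul, hab, one_mul]
      simp only [smul_eq_mul]
      nlinarith [mul_le_mul_of_nonneg_left hx ha, mul_le_mul_of_nonneg_left hy hb]
    have h3 : f (Fin.cons (v 0) (Fin.tail v)) ≤ X :=
      convexHull_min (show G ⊆ _ from key) hc (hv 0)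
    rwa [Fin.cons_self_tail] at h3

lemma mixVec_mem {k : ℕ} {φ ψ : W} {A : Set W} (hφ : φ ∈ A) (hψ : ψ ∈ A) (j : ℕ) (i : Fin k) :
    mixVec φ ψ j i ∈ A := by
  unfold mixVec
  split_ifs <;> assumption

/-- Telescoping one step for `mixVec`. -/
lemma B_mix_step (S : MASetup m W) (φ ψ u : W) (j : ℕ) (hj : j < m + 1) :
    S.B (Fin.cons u (mixVec φ ψ j)) - S.B (Fin.cons u (mixVec φ ψ (j + 1))) =
      - S.T u (φ - ψ) (mixVec φ ψ j) := by
  set p : Fin (m + 1) := ⟨j, hj⟩ with hp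
  have e1 : (mixVec φ ψ j : Fin (m + 1) → W) = Function.update (mixVec φ ψ j) p ψ := by
    funext i
    by_cases hi : i = p
    · subst hi; simp [mixVec, hp]
    · rw [Function.update_of_ne hi]
  have e2 : (mixVec φ ψ (j + 1) : Fin (m + 1) → W) = Function.update (mixVec φ ψ j) p φ := by
    funext i
    by_cases hi : i = p
    · subst hi; simp [mixVec, hp]
    · rw [Function.update_of_ne hi]
      have : (i : ℕ) ≠ j := fun h => hi (Fin.ext h)
      simp only [mixVec]
      congr 1
      simp only [eq_iff_iff]
      omega
  have e3 : S.T u (φ - ψ) (mixVec φ ψ j) =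
      S.B (Fin.cons u (Function.update (mixVec φ ψ j) p (φ - ψ))) := by
    rw [B_update]
    congr 1
    funext i
    by_cases hi : i.succ = p
    · rw [hi, Equiv.swap_apply_right]
      have : (i : ℕ) + 1 = j := by simpa [hp] using congrArg Fin.val hi
      have h1 : (i : ℕ) < j := by omega
      have h2 : 0 < j := by omega
      simp [mixVec, h1, h2]
    · rw [Equiv.swap_apply_of_ne_of_ne (Fin.succ_ne_zero _) hi]
      have : (i : ℕ) + 1 ≠ j := by
        intro h
        exact hi (Fin.ext (by simpa [hp] using h))
      simp only [mixVec, Fin.val_succ]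
      congr 1
      simp only [eq_iff_iff]
      omega
  rw [e3]
  have := (S.B.curryLeft u).map_update_sub (mixVec φ ψ j) p φ ψ
  simp only [MultilinearMap.curryLeft_apply] at this
  rw [this, ← e1, ← e2]
  ring

lemma I_eq_sum (S : MASetup m W) (φ ψ : W) :
    S.Ifun φ ψ = ∑ j ∈ Finset.range (m + 1), S.Q (mixVec φ ψ j) (φ - ψ) := by
  have h : ∀ j ∈ Finset.range (m + 1), S.Q (mixVec φ ψ j) (φ - ψ) =
      S.B (Fin.cons (φ - ψ) (mixVec φ ψ j)) - S.B (Fin.cons (φ - ψ) (mixVec φ ψ (j + 1))) := by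
    intro j hj
    rw [B_mix_step S φ ψ _ j (Finset.mem_range.1 hj)]
    rfl
  rw [Finset.sum_congr rfl h, Finset.sum_range_sub']
  unfold Ifun
  have e : (mixVec φ ψ (m + 1) : Fin (m + 1) → W) = fun _ => φ := by
    funext i
    simp only [mixVec]
    rw [if_pos i.2]
  rw [e]
  rfl

lemma Q_mix_le_I (S : MASetup m W) {φ ψ : W} (hφ : φ ∈ S.F) (hψ : ψ ∈ S.F) (j : ℕ)
    (hj : j ≤ m) : S.Q (mixVec φ ψ j) (φ - ψ) ≤ S.Ifun φ ψ := by
  rw [I_eq_sum]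
  exact Finset.single_le_sum (f := fun j => S.Q (mixVec φ ψ j) (φ - ψ))
    (fun i _ => S.Q_nonneg (mixVec_mem hφ hψ i) (S.sub_mem_W0 hφ hψ))
    (Finset.mem_range.2 (by omega))

lemma I_nonneg (S : MASetup m W) {φ ψ : W} (hφ : φ ∈ S.F) (hψ : ψ ∈ S.F) :
    0 ≤ S.Ifun φ ψ :=
  (S.Q_nonneg (mixVec_mem hφ hψ 0) (S.sub_mem_W0 hφ hψ)).trans
    (S.Q_mix_le_I hφ hψ 0 (by omega))

lemma I_le_J (S : MASetup m W) {φ ψ : W} (hφ : φ ∈ S.F) (hψ : ψ ∈ S.F) :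
    S.Ifun φ ψ ≤ (m + 2) * S.Jfun ψ φ := by
  set b : ℕ → ℝ := fun j => S.B (Fin.cons (φ - ψ) (mixVec φ ψ j)) with hb
  have hb0 : S.B (Fin.cons (φ - ψ) fun _ => ψ) = b 0 := by
    simp only [hb]; congr 2
  have hb1 : S.B (Fin.cons (φ - ψ) fun _ => φ) = b (m + 1) := by
    simp only [hb]; congr 2; funext i; simp only [mixVec]; rw [if_pos i.2]
  have hdec : ∀ j, j ≤ m + 1 → b j ≤ b 0 := by
    intro j
    induction j with
    | zero => intro _; exact le_rfl
    | succ j ih =>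
      intro hj
      refine le_trans ?_ (ih (by omega))
      have h1 := B_mix_step S φ ψ (φ - ψ) j (by omega)
      have h2 := S.Q_nonneg (mixVec_mem hφ hψ j) (S.sub_mem_W0 hφ hψ)
      unfold Q at h2
      simp only [hb]
      linarith
  have hm : ((m : ℝ) + 2) ≠ 0 := by positivity
  have e : (m + 2) * S.Jfun ψ φ = ∑ j ∈ Finset.range (m + 2), (b 0 - b j) := by
    unfold Jfun energy
    rw [hb0, mul_sub, mul_inv_cancel_left₀ hm, Finset.sum_sub_distrib]
    simp [hb]
  rw [e]
  unfold Ifun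
  rw [hb0, hb1]
  exact Finset.single_le_sum (f := fun j => b 0 - b j)
    (fun i hi => sub_nonneg.2 (hdec i (by have := Finset.mem_range.1 hi; omega)))
    (Finset.mem_range.2 (by omega))

lemma J_nonneg (S : MASetup m W) {φ ψ : W} (hφ : φ ∈ S.F) (hψ : ψ ∈ S.F) :
    0 ≤ S.Jfun ψ φ := by
  have h1 := S.I_le_J hφ hψ
  have h2 := S.I_nonneg hφ hψ
  have : (0 : ℝ) < m + 2 := by positivity
  by_contra h
  push Not at h
  nlinarith

lemma exists_mix (φ ψ : W) (h : Fin m → W) (hh : ∀ i, h i ∈ ({φ, ψ} : Set W)) :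
    ∃ σ : Equiv.Perm (Fin m), ∃ j, j ≤ m ∧ h ∘ σ = mixVec φ ψ j := by
  classical
  set f : Fin m → ℕ := fun i => if h i = φ then 0 else 1 with hf
  set σ := Tuple.sort f
  have hmono : Monotone (f ∘ σ) := Tuple.monotone_sort f
  have hex : ∃ j, ∀ i : Fin m, j ≤ (i : ℕ) → f (σ i) ≠ 0 :=
    ⟨m, fun i hi => absurd i.2 (by omega)⟩
  refine ⟨σ, Nat.find hex, Nat.find_min' hex (fun i hi => absurd i.2 (by omega)), ?_⟩
  funext i
  simp only [mixVec, Function.comp]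
  split_ifs with hi
  · have := Nat.find_min hex hi
    push Not at this
    obtain ⟨i', hi', h0⟩ := this
    have h1 : f (σ i) ≤ f (σ i') := hmono (Fin.le_def.2 hi')
    have h2 : f (σ i) = 0 := by omega
    by_contra hne
    simp [hf, hne] at h2
  · have := Nat.find_spec hex i (by omega)
    have hne : h (σ i) ≠ φ := by
      intro he
      simp [hf, he] at this
    rcases hh (σ i) with h | h
    · exact absurd h hne
    · exact h

lemma Q_mid_le_I (S : MASetup m W) {φ ψ : W} (hφ : φ ∈ S.F) (hψ : ψ ∈ S.F)
    (g : Fin m → W) (hg : ∀ i, g i ∈ convexHull ℝ ({φ, ψ} : Set W)) :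
    S.Q g (φ - ψ) ≤ S.Ifun φ ψ := by
  refine hull_bound m (-(S.T (φ - ψ) (φ - ψ))) {φ, ψ} _ (fun v hv => ?_) g hg
  obtain ⟨σ, j, hj, he⟩ := exists_mix φ ψ v hv
  have := S.Q_mix_le_I hφ hψ j hj
  unfold Q at this
  rw [← he, T_perm] at this
  exact this

/-- Key estimate on a convex set with bounded seminorms. -/
lemma key (S : MASetup m W) (G : Set W) (hGF : G ⊆ S.F) (hG : Convex ℝ G) (X : ℝ)
    (hX : ∀ w ∈ G, ∀ w' ∈ G, ∀ g : Fin m → W, (∀ i, g i ∈ G) → S.Q g (w - w') ≤ X)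
    {ψ₁ ψ₂ : W} (h₁ : ψ₁ ∈ G) (h₂ : ψ₂ ∈ G) (g : Fin m → W) (hg : ∀ i, g i ∈ G) :
    S.Q g (ψ₁ - ψ₂) ^ (2 ^ m) ≤ 16 ^ (2 ^ m) * S.Ifun ψ₁ ψ₂ * X ^ (2 ^ m - 1) := by
  set ψ : W := (1 / 2 : ℝ) • ψ₁ + (1 / 2 : ℝ) • ψ₂ with hψ
  have hψG : ψ ∈ G := hG h₁ h₂ (by norm_num) (by norm_num) (by norm_num)
  set u := ψ₁ - ψ₂ with hu
  have huW : u ∈ S.W0 := S.sub_mem_W0 (hGF h₁) (hGF h₂)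
  set H : ℕ → Fin m → W := fun p i => if (i : ℕ) < p then g i else ψ with hH
  have hHG : ∀ p i, H p i ∈ G := by
    intro p i
    simp only [hH]
    split_ifs
    · exact hg i
    · exact hψG
  have hb : ∀ p, 0 ≤ S.Q (H p) u := fun p => S.Q_nonneg (fun i => hGF (hHG p i)) huW
  have hbX : ∀ p, S.Q (H p) u ≤ X := fun p => hX _ h₁ _ h₂ _ (hHG p)
  have hX0 : 0 ≤ X := (hb 0).trans (hbX 0)
  have step : ∀ p, p < m → S.Q (H (p + 1)) u ^ 2 ≤ 16 * S.Q (H p) u * X := by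
    intro p hp
    set q : Fin m := ⟨p, hp⟩ with hq
    have e1 : H p = Function.update (H p) q ψ := by
      funext i
      by_cases hi : i = q
      · subst hi; simp [hH, hq]
      · rw [Function.update_of_ne hi]
    have e2 : H (p + 1) = Function.update (H p) q (g q) := by
      funext i
      by_cases hi : i = q
      · subst hi; simp [hH, hq]
      · rw [Function.update_of_ne hi]
        have : (i : ℕ) ≠ p := fun h => hi (Fin.ext h)
        simp only [hH]
        congr 1
        simp only [eq_iff_iff]
        omega
    have hm : ∀ w ∈ G, ∀ i, Function.update (H p) q w i ∈ G := by
      intro w hw i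
      by_cases hi : i = q
      · subst hi; simpa using hw
      · rw [Function.update_of_ne hi]; exact hHG p i
    have hx : g q - ψ ∈ S.W0 := S.sub_mem_W0 (hGF (hg q)) (hGF hψG)
    have c1 := S.cs (fun i => hGF (hm ψ₁ h₁ i)) huW hx
    have c2 := S.cs (fun i => hGF (hm ψ₂ h₂ i)) huW hx
    have x1 := hX _ (hg q) _ hψG _ (hm ψ₁ h₁)
    have x2 := hX _ (hg q) _ hψG _ (hm ψ₂ h₂)
    have n1 := S.Q_nonneg (fun i => hGF (hm ψ₁ h₁ i)) huW
    have n2 := S.Q_nonneg (fun i => hGF (hm ψ₂ h₂ i)) huW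
    have n3 : 2 * S.Q (H p) u = S.Q (Function.update (H p) q ψ₁) u +
        S.Q (Function.update (H p) q ψ₂) u := by
      conv_lhs => rw [e1]
      unfold Q
      rw [hψ, MultilinearMap.map_update_add, MultilinearMap.map_update_smul,
        MultilinearMap.map_update_smul]
      simp only [smul_eq_mul]
      ring
    have n4 : S.Q (H (p + 1)) u = S.Q (H p) u - (S.T u (g q - ψ) (Function.update (H p) q ψ₁)
        - S.T u (g q - ψ) (Function.update (H p) q ψ₂)) := by
      rw [← MultilinearMap.map_update_sub, ← hu, T_swap, MultilinearMap.map_update_sub,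
        ← e1, ← e2]
      unfold Q
      ring
    have hbp := hb p
    have hbXp := hbX p
    rw [n4]
    generalize S.T u (g q - ψ) (Function.update (H p) q ψ₁) = t1 at *
    generalize S.T u (g q - ψ) (Function.update (H p) q ψ₂) = t2 at *
    have d1 : t1 ^ 2 ≤ 2 * S.Q (H p) u * X :=
      c1.trans ((mul_le_mul_of_nonneg_left x1 n1).trans
        (mul_le_mul_of_nonneg_right (by linarith) hX0))
    have d2 : t2 ^ 2 ≤ 2 * S.Q (H p) u * X :=
      c2.trans ((mul_le_mul_of_nonneg_left x2 n2).trans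
        (mul_le_mul_of_nonneg_right (by linarith) hX0))
    have d3 : S.Q (H p) u ^ 2 ≤ S.Q (H p) u * X := by
      rw [sq]; exact mul_le_mul_of_nonneg_left hbXp hbp
    have d4 : 0 ≤ S.Q (H p) u * X := mul_nonneg hbp hX0
    generalize S.Q (H p) u = b at *
    nlinarith [sq_nonneg (b + t1), sq_nonneg (b - t2), sq_nonneg (t1 + t2)]
  have main : ∀ p, p ≤ m → S.Q (H p) u ^ (2 ^ p) ≤
      16 ^ (2 ^ p) * S.Ifun ψ₁ ψ₂ * X ^ (2 ^ p - 1) := by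
    intro p
    induction p with
    | zero =>
      intro _
      have h1 : S.Q (H 0) u ≤ S.Ifun ψ₁ ψ₂ := by
        refine S.Q_mid_le_I (hGF h₁) (hGF h₂) _ (fun i => ?_)
        simp only [hH, Nat.not_lt_zero, if_false]
        exact convex_convexHull ℝ _ (subset_convexHull ℝ _ (by simp))
          (subset_convexHull ℝ _ (by simp)) (by norm_num) (by norm_num) (by norm_num)
      have := hb 0
      simp
      linarith
    | succ p ih =>
      intro hp
      have h1 := ih (by omega)
      have h2 := step p (by omega)
      have e : 2 ^ (p + 1) - 1 = 2 ^ p + (2 ^ p - 1) := by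
        have : 1 ≤ 2 ^ p := Nat.one_le_two_pow
        omega
      have e' : 2 ^ (p + 1) = 2 ^ p + 2 ^ p := by ring
      calc S.Q (H (p + 1)) u ^ 2 ^ (p + 1) = (S.Q (H (p + 1)) u ^ 2) ^ 2 ^ p := by
            rw [← pow_mul]; congr 1; ring
        _ ≤ (16 * S.Q (H p) u * X) ^ 2 ^ p := by gcongr
        _ = 16 ^ 2 ^ p * X ^ 2 ^ p * S.Q (H p) u ^ 2 ^ p := by rw [mul_pow, mul_pow]; ring
        _ ≤ 16 ^ 2 ^ p * X ^ 2 ^ p * (16 ^ (2 ^ p) * S.Ifun ψ₁ ψ₂ * X ^ (2 ^ p - 1)) := by gcongr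
        _ = 16 ^ 2 ^ (p + 1) * S.Ifun ψ₁ ψ₂ * X ^ (2 ^ (p + 1) - 1) := by
            rw [e, e', pow_add, pow_add]; ring
  have := main m le_rfl
  have hHm : H m = g := by
    funext i; simp [hH]
  rwa [hHm] at this

/-- Seminorm bounds pass from a set to differences in its convex hull. -/
lemma hull_X (S : MASetup m W) (G : Set W) (hGF : G ⊆ S.F) {r : W} (hr : r ∈ S.F) (X : ℝ)
    (hX : ∀ w ∈ G, ∀ g : Fin m → W, (∀ i, g i ∈ G) → S.Q g (w - r) ≤ X) :
    ∀ w ∈ convexHull ℝ G, ∀ w' ∈ convexHull ℝ G, ∀ g : Fin m → W,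
      (∀ i, g i ∈ convexHull ℝ G) → S.Q g (w - w') ≤ 4 * X := by
  have hF : convexHull ℝ G ⊆ S.F := convexHull_min hGF S.Fconv
  have h1 : ∀ w ∈ G, ∀ g : Fin m → W, (∀ i, g i ∈ convexHull ℝ G) → S.Q g (w - r) ≤ X :=
    fun w hw => hull_bound m (-(S.T (w - r) (w - r))) G X (hX w hw)
  have h2 : ∀ w ∈ convexHull ℝ G, ∀ g : Fin m → W, (∀ i, g i ∈ convexHull ℝ G) →
      S.Q g (w - r) ≤ X := by
    intro w hw g hg
    have hc : Convex ℝ {x : W | x ∈ S.F ∧ S.Q g (x - r) ≤ X} := by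
      rintro x ⟨hxF, hx⟩ y ⟨hyF, hy⟩ a b ha hb hab
      refine ⟨S.Fconv hxF hyF ha hb hab, ?_⟩
      have e : a • x + b • y - r = a • (x - r) + b • (y - r) := by
        have : r = (a + b) • r := by rw [hab, one_smul]
        conv_lhs => rw [this]
        module
      rw [e, Q_comb]
      have hn := S.Q_nonneg (fun i => hF (hg i)) (S.W0.add_mem
        (S.W0.smul_mem 1 (S.sub_mem_W0 hxF hr)) (S.W0.smul_mem (-1) (S.sub_mem_W0 hyF hr)))
      rw [Q_comb] at hn
      have hb' : b = 1 - a := by linarith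
      have hn' := mul_nonneg (mul_nonneg ha hb) hn
      have k1 := mul_le_mul_of_nonneg_left hx ha
      have k2 := mul_le_mul_of_nonneg_left hy hb
      subst hb'
      nlinarith
    have hsub : G ⊆ {x : W | x ∈ S.F ∧ S.Q g (x - r) ≤ X} :=
      fun x hx => ⟨hGF hx, h1 x hx g hg⟩
    exact (convexHull_min hsub hc hw).2
  intro w hw w' hw' g hg
  have a1 := h2 w hw g hg
  have a2 := h2 w' hw' g hg
  have e : w - w' = (1 : ℝ) • (w - r) + (-1 : ℝ) • (w' - r) := by module
  have hn := S.Q_nonneg (fun i => hF (hg i)) (S.W0.add_mem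
    (S.W0.smul_mem 1 (S.sub_mem_W0 (hF hw) hr)) (S.W0.smul_mem 1 (S.sub_mem_W0 (hF hw') hr)))
  rw [Q_comb] at hn
  rw [e, Q_comb]
  linarith

/-- The a priori bound by `J`, and the resulting seminorm estimate. -/
lemma seminorm_bound (S : MASetup m W) (G : Set W) (hfin : G.Finite) (hGF : G ⊆ S.F) {r : W}
    (hr : r ∈ G) (M : ℝ) (hM : ∀ w ∈ G, S.Jfun r w ≤ M)
    {ψ₁ ψ₂ : W} (h₁ : ψ₁ ∈ G) (h₂ : ψ₂ ∈ G) (g : Fin m → W) (hg : ∀ i, g i ∈ G) :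
    S.Q g (ψ₁ - ψ₂) ^ (2 ^ m) ≤ 16 ^ (2 ^ m) * S.Ifun ψ₁ ψ₂ *
      (4 * (64 ^ (2 ^ m) * (m + 2) * M)) ^ (2 ^ m - 1) := by
  have hrF := hGF hr
  have hF : convexHull ℝ G ⊆ S.F := convexHull_min hGF S.Fconv
  have hM0 : 0 ≤ M := (S.J_nonneg hrF hrF).trans (hM r hr)
  set A : Set (W × (Fin m → W)) := G ×ˢ (Set.univ.pi fun _ => G) with hA
  have hAf : A.Finite := hfin.prod (Set.Finite.pi (fun _ => hfin))
  have hAne : A.Nonempty := ⟨(r, fun _ => r), Set.mk_mem_prod hr (fun _ _ => hr)⟩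
  obtain ⟨⟨w₀, g₀⟩, ⟨hw₀, hg₀⟩, hmax⟩ :=
    Set.exists_max_image A (fun x => S.Q x.2 (x.1 - r)) hAf hAne
  have hg₀' : ∀ i, g₀ i ∈ G := fun i => hg₀ i trivial
  simp only at hmax hw₀
  set X := S.Q g₀ (w₀ - r) with hXd
  have hX0 : 0 ≤ X := S.Q_nonneg (fun i => hGF (hg₀' i)) (S.sub_mem_W0 (hGF hw₀) hrF)
  have hXb := S.hull_X G hGF hrF X (fun w hw g hg => hmax (w, g) (Set.mk_mem_prod hw (fun i _ => hg i)))
  have hsub := subset_convexHull ℝ G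
  have hk := fun {ψ₁ ψ₂ : W} (h₁ : ψ₁ ∈ G) (h₂ : ψ₂ ∈ G) (g : Fin m → W) (hg : ∀ i, g i ∈ G) =>
    S.key (convexHull ℝ G) hF (convex_convexHull ℝ G) (4 * X) hXb (hsub h₁) (hsub h₂) g
      (fun i => hsub (hg i))
  have hXM : X ≤ 64 ^ (2 ^ m) * (m + 2) * M := by
    rcases hX0.eq_or_lt with h0 | hpos
    · rw [← h0]; positivity
    have h1 := hk hw₀ hr g₀ hg₀'
    rw [← hXd] at h1
    have hI : S.Ifun w₀ r ≤ (m + 2) * M :=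
      (S.I_le_J (hGF hw₀) hrF).trans
        (mul_le_mul_of_nonneg_left (hM w₀ hw₀) (by positivity))
    have hN : 2 ^ m = (2 ^ m - 1) + 1 := by
      have : 1 ≤ 2 ^ m := Nat.one_le_two_pow
      omega
    have h2 : X * X ^ (2 ^ m - 1) ≤ (64 ^ (2 ^ m) * (m + 2) * M) * X ^ (2 ^ m - 1) := by
      calc X * X ^ (2 ^ m - 1) = X ^ (2 ^ m) := by
            conv_rhs => rw [hN, pow_succ]
            ring
        _ ≤ 16 ^ (2 ^ m) * S.Ifun w₀ r * (4 * X) ^ (2 ^ m - 1) := h1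
        _ ≤ 16 ^ (2 ^ m) * ((m + 2) * M) * (4 * X) ^ (2 ^ m - 1) := by gcongr
        _ = (16 ^ (2 ^ m) * 4 ^ (2 ^ m - 1)) * (((m + 2) * M) * X ^ (2 ^ m - 1)) := by
            rw [mul_pow]; ring
        _ ≤ (16 ^ (2 ^ m) * 4 ^ (2 ^ m)) * (((m + 2) * M) * X ^ (2 ^ m - 1)) := by
            gcongr
            · norm_num
            · omega
        _ = (64 ^ (2 ^ m) * (m + 2) * M) * X ^ (2 ^ m - 1) := by
            rw [← mul_pow]; norm_num; ring
    exact le_of_mul_le_mul_right h2 (by positivity)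
  refine (hk h₁ h₂ g hg).trans ?_
  have := S.I_nonneg (hGF h₁) (hGF h₂)
  gcongr

/-- Telescoping bound. -/
lemma telescope (S : MASetup m W) (u : W) (φs φs' : Fin (m + 1) → W) (D : ℝ)
    (hD : ∀ p, ∀ g : Fin m → W, (∀ i, g i ∈ Set.range φs ∪ Set.range φs') →
      |S.T u (φs' p - φs p) g| ≤ D) :
    |S.B (Fin.cons u φs') - S.B (Fin.cons u φs)| ≤ (m + 1) * D := by
  set H : ℕ → Fin (m + 1) → W := fun p i => if (i : ℕ) < p then φs' i else φs i with hH
  have hHm : ∀ p i, H p i ∈ Set.range φs ∪ Set.range φs' := by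
    intro p i
    simp only [hH]
    split_ifs
    · exact Or.inr ⟨i, rfl⟩
    · exact Or.inl ⟨i, rfl⟩
  have step : ∀ p ∈ Finset.range (m + 1),
      |S.B (Fin.cons u (H (p + 1))) - S.B (Fin.cons u (H p))| ≤ D := by
    intro p hp
    set q : Fin (m + 1) := ⟨p, Finset.mem_range.1 hp⟩ with hq
    have e1 : H p = Function.update (H p) q (φs q) := by
      funext i
      by_cases hi : i = q
      · subst hi; simp [hH, hq]
      · rw [Function.update_of_ne hi]
    have e2 : H (p + 1) = Function.update (H p) q (φs' q) := by
      funext i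
      by_cases hi : i = q
      · subst hi; simp [hH, hq]
      · rw [Function.update_of_ne hi]
        have : (i : ℕ) ≠ p := fun h => hi (Fin.ext h)
        simp only [hH]
        congr 1
        simp only [eq_iff_iff]
        omega
    have := (S.B.curryLeft u).map_update_sub (H p) q (φs' q) (φs q)
    simp only [MultilinearMap.curryLeft_apply] at this
    rw [← e1, ← e2, B_update] at this
    rw [← this]
    exact hD q _ (fun i => hHm _ _)
  have hs := Finset.sum_range_sub (fun p => S.B (Fin.cons u (H p))) (m + 1)
  have h0 : H 0 = φs := by funext i; simp [hH]
  have h1 : H (m + 1) = φs' := by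
    funext i
    simp only [hH]
    rw [if_pos i.2]
  rw [h0, h1] at hs
  rw [← hs]
  refine (Finset.abs_sum_le_sum_abs _ _).trans ((Finset.sum_le_sum step).trans ?_)
  simp

/-- Extraction of roots. -/
lemma root_bound (N : ℕ) (hN : 1 ≤ N) (t a b I₁ I₂ K M : ℝ) (hI₁ : 0 ≤ I₁) (hI₂ : 0 ≤ I₂)
    (hK : 1 ≤ K) (hM : 0 ≤ M) (ha0 : 0 ≤ a) (hb0 : 0 ≤ b) (ht : t ^ 2 ≤ a * b)
    (ha : a ^ N ≤ 16 ^ N * I₁ * (K * M) ^ (N - 1))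
    (hb : b ^ N ≤ 16 ^ N * I₂ * (K * M) ^ (N - 1)) :
    |t| ≤ 16 * K * I₁ ^ ((1 : ℝ) / (2 * N)) * I₂ ^ ((1 : ℝ) / (2 * N)) *
      M ^ (1 - (1 : ℝ) / N) := by
  have hNR : (0 : ℝ) < N := by exact_mod_cast hN
  have hKM : 0 ≤ K * M := by positivity
  have hexp : 0 ≤ 1 - (1 : ℝ) / N := by
    rw [sub_nonneg, div_le_one hNR]; exact_mod_cast hN
  have e1 : ∀ I : ℝ, 0 ≤ I → (I ^ ((1 : ℝ) / (2 * N))) ^ (2 * N) = I := by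
    intro I hI
    rw [← Real.rpow_natCast, ← Real.rpow_mul hI]
    push_cast
    rw [one_div, inv_mul_cancel₀ (by positivity), Real.rpow_one]
  have e2 : ((K * M) ^ (1 - (1 : ℝ) / N)) ^ (2 * N) = ((K * M) ^ (N - 1)) ^ 2 := by
    rw [← Real.rpow_natCast, ← Real.rpow_mul hKM, ← pow_mul, ← Real.rpow_natCast]
    congr 1
    push_cast [Nat.cast_sub hN]
    field_simp
  have h1 : |t| ^ (2 * N) ≤ (16 * I₁ ^ ((1 : ℝ) / (2 * N)) * I₂ ^ ((1 : ℝ) / (2 * N)) *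
      (K * M) ^ (1 - (1 : ℝ) / N)) ^ (2 * N) := by
    rw [mul_pow, mul_pow, mul_pow, e1 _ hI₁, e1 _ hI₂, e2, pow_mul, sq_abs]
    calc (t ^ 2) ^ N ≤ (a * b) ^ N := by gcongr
      _ = a ^ N * b ^ N := mul_pow _ _ _
      _ ≤ (16 ^ N * I₁ * (K * M) ^ (N - 1)) * (16 ^ N * I₂ * (K * M) ^ (N - 1)) := by gcongr
      _ = _ := by rw [mul_comm 2 N, pow_mul]; ring
  have h2 := le_of_pow_le_pow_left₀ (by omega : 2 * N ≠ 0) (by positivity) h1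
  refine h2.trans ?_
  rw [Real.mul_rpow (by positivity) hM]
  have hK' : K ^ (1 - (1 : ℝ) / N) ≤ K := by
    conv_rhs => rw [← Real.rpow_one K]
    apply Real.rpow_le_rpow_of_exponent_le hK
    have : 0 ≤ (1 : ℝ) / N := by positivity
    linarith
  calc 16 * I₁ ^ ((1 : ℝ) / (2 * N)) * I₂ ^ ((1 : ℝ) / (2 * N)) *
      (K ^ (1 - (1 : ℝ) / N) * M ^ (1 - (1 : ℝ) / N))
      ≤ 16 * I₁ ^ ((1 : ℝ) / (2 * N)) * I₂ ^ ((1 : ℝ) / (2 * N)) *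
      (K * M ^ (1 - (1 : ℝ) / N)) := by gcongr
    _ = _ := by ring

end MASetup

/-- there is `C > 0` depending only on `n = m + 1` such that for
every setup, reference `φ_ref ∈ F`, and all `ψ₁, ψ₂, φ₁, …, φₙ, φ'₁, …, φ'ₙ ∈ F`:
`|B(ψ₁-ψ₂, φ'₁,…,φ'ₙ) - B(ψ₁-ψ₂, φ₁,…,φₙ)| ≤
  C I(ψ₁,ψ₂)^{1/2ⁿ} (max_p I(φ_p,φ'_p))^{1/2ⁿ} M^{1-1/2^{n-1}}` where
`M = max{J(ψ₁), J(ψ₂), max_p J(φ_p), max_p J(φ'_p)}`. -/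
theorem mixed_MA_continuity (m : ℕ) :
    ∃ C : ℝ, 0 < C ∧
      ∀ (W : Type*) [AddCommGroup W] [Module ℝ W] (S : MASetup m W),
        ∀ φref ∈ S.F, ∀ ψ₁ ∈ S.F, ∀ ψ₂ ∈ S.F,
          ∀ φs φs' : Fin (m + 1) → W, (∀ p, φs p ∈ S.F) → (∀ p, φs' p ∈ S.F) →
            |S.B (Fin.cons (ψ₁ - ψ₂) φs') - S.B (Fin.cons (ψ₁ - ψ₂) φs)| ≤
              C * S.Ifun ψ₁ ψ₂ ^ ((1 : ℝ) / 2 ^ (m + 1)) *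
                (Finset.univ.sup' Finset.univ_nonempty
                    fun p => S.Ifun (φs p) (φs' p)) ^ ((1 : ℝ) / 2 ^ (m + 1)) *
                (max (max (S.Jfun φref ψ₁) (S.Jfun φref ψ₂))
                    (max
                      (Finset.univ.sup' Finset.univ_nonempty
                        fun p => S.Jfun φref (φs p))
                      (Finset.univ.sup' Finset.univ_nonempty
                        fun p => S.Jfun φref (φs' p)))) ^
                  (1 - (1 : ℝ) / 2 ^ m) := by
  have hKpos : (1 : ℝ) ≤ 4 * (64 ^ (2 ^ m) * (m + 2)) := by
    have h1 : (1 : ℝ) ≤ 64 ^ (2 ^ m) := one_le_pow₀ (by norm_num)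
    have h2 : (0 : ℝ) ≤ m := by positivity
    nlinarith
  refine ⟨(m + 1) * (16 * (4 * (64 ^ (2 ^ m) * (m + 2)))), by positivity, ?_⟩
  intro W _ _ S r hr ψ₁ h₁ ψ₂ h₂ φs φs' hφ hφ'
  set Imax := Finset.univ.sup' Finset.univ_nonempty fun p => S.Ifun (φs p) (φs' p) with hI
  set M := (max (max (S.Jfun r ψ₁) (S.Jfun r ψ₂))
                    (max
                      (Finset.univ.sup' Finset.univ_nonempty
                        fun p => S.Jfun r (φs p))
                      (Finset.univ.sup' Finset.univ_nonempty
                        fun p => S.Jfun r (φs' p)))) with hM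
  have hMψ₁ : S.Jfun r ψ₁ ≤ M := (le_max_left _ _).trans (le_max_left _ _)
  have hMψ₂ : S.Jfun r ψ₂ ≤ M := (le_max_right _ _).trans (le_max_left _ _)
  have hMφ : ∀ p, S.Jfun r (φs p) ≤ M := fun p =>
    (Finset.le_sup' (fun p => S.Jfun r (φs p)) (Finset.mem_univ p)).trans
      ((le_max_left _ _).trans (le_max_right _ _))
  have hMφ' : ∀ p, S.Jfun r (φs' p) ≤ M := fun p =>
    (Finset.le_sup' (fun p => S.Jfun r (φs' p)) (Finset.mem_univ p)).trans
      ((le_max_right _ _).trans (le_max_right _ _))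
  have hM0 : 0 ≤ M := (S.J_nonneg h₁ hr).trans hMψ₁
  have hrr : S.Jfun r r = 0 := by
    have hz : ∀ v : Fin (m + 1) → W, S.B (Fin.cons 0 v) = 0 := fun v =>
      S.B.map_coord_zero 0 (by simp)
    simp [MASetup.Jfun, MASetup.energy, hz]
  set G : Set W := {r, ψ₁, ψ₂} ∪ (Set.range φs ∪ Set.range φs') with hG
  have hGfin : G.Finite :=
    (Set.toFinite _).union ((Set.finite_range _).union (Set.finite_range _))
  have hGF : G ⊆ S.F := by
    rintro x ((rfl | rfl | rfl) | (⟨p, rfl⟩ | ⟨p, rfl⟩))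
    · exact hr
    · exact h₁
    · exact h₂
    · exact hφ p
    · exact hφ' p
  have hGM : ∀ w ∈ G, S.Jfun r w ≤ M := by
    rintro x ((rfl | rfl | rfl) | (⟨p, rfl⟩ | ⟨p, rfl⟩))
    · rw [hrr]; exact hM0
    · exact hMψ₁
    · exact hMψ₂
    · exact hMφ p
    · exact hMφ' p
  have hrG : r ∈ G := Or.inl (by simp)
  have h1G : ψ₁ ∈ G := Or.inl (by simp)
  have h2G : ψ₂ ∈ G := Or.inl (by simp)
  have hI0 : 0 ≤ Imax :=
    (S.I_nonneg (hφ 0) (hφ' 0)).trans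
      (Finset.le_sup' (fun p => S.Ifun (φs p) (φs' p)) (Finset.mem_univ 0))
  have hass : ∀ M : ℝ, 4 * (64 ^ (2 ^ m) * ((m : ℝ) + 2) * M) =
      4 * (64 ^ (2 ^ m) * ((m : ℝ) + 2)) * M := fun M => by ring
  have hT := S.telescope (ψ₁ - ψ₂) φs φs' (16 * (4 * (64 ^ (2 ^ m) * (m + 2))) *
      S.Ifun ψ₁ ψ₂ ^ ((1 : ℝ) / 2 ^ (m + 1)) * Imax ^ ((1 : ℝ) / 2 ^ (m + 1)) *
      M ^ (1 - (1 : ℝ) / 2 ^ m)) (by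
    intro p g hg
    have hgG : ∀ i, g i ∈ G := fun i => Or.inr (hg i)
    have hpG : φs p ∈ G := Or.inr (Or.inl ⟨p, rfl⟩)
    have hpG' : φs' p ∈ G := Or.inr (Or.inr ⟨p, rfl⟩)
    have k1 := S.seminorm_bound G hGfin hGF hrG M hGM h1G h2G g hgG
    have k2 := S.seminorm_bound G hGfin hGF hrG M hGM hpG hpG' g hgG
    have hgF := fun i => hGF (hgG i)
    have hW1 := S.sub_mem_W0 h₁ h₂
    have hW2 := S.sub_mem_W0 (hφ p) (hφ' p)
    have c := S.cs hgF hW1 hW2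
    have e : S.T (ψ₁ - ψ₂) (φs' p - φs p) g = - S.T (ψ₁ - ψ₂) (φs p - φs' p) g := by
      have : φs' p - φs p = (-1 : ℝ) • (φs p - φs' p) := by module
      rw [this, S.T_comm, S.T_smul_left, S.T_comm]
      ring
    have hIp : S.Ifun (φs p) (φs' p) ≤ Imax :=
      Finset.le_sup' (fun p => S.Ifun (φs p) (φs' p)) (Finset.mem_univ p)
    rw [hass] at k1 k2
    have k2' : S.Q g (φs p - φs' p) ^ 2 ^ m ≤ 16 ^ 2 ^ m * Imax *
        (4 * (64 ^ (2 ^ m) * ((m : ℝ) + 2)) * M) ^ (2 ^ m - 1) :=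
      k2.trans (by gcongr)
    have := MASetup.root_bound (2 ^ m) Nat.one_le_two_pow _ _ _ _ _ _ _
      (S.I_nonneg h₁ h₂) hI0 hKpos hM0 (S.Q_nonneg hgF hW1) (S.Q_nonneg hgF hW2) c k1 k2'
    rw [e, abs_neg]
    have e2 : (2 : ℝ) * ((2 ^ m : ℕ) : ℝ) = 2 ^ (m + 1) := by push_cast; ring
    rw [e2] at this
    push_cast at this
    exact this)
  refine hT.trans (le_of_eq ?_)
  ring
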